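/- arXiv:1304.4000 — 7 statements merged into one kernel-verified Lean document; each statement's English description precedes it below -/
import Mathlib

section
/- Let p > 2 and w(s) = (cosh s)^{-2/(p-2)}. Then w is a positive solution of -(p-2)² w'' + 4 w - 2 p w^{p-1} = 0 on ℝ, and moreover, if v : ℝ → ℝ is a positive, twice continuously differentiable solution of -(p-2)² v'' + 4 v - 2 p v^{p-1} = 0 with v(s) → 0 as |s| → ∞, then there exists s₀ ∈ ℝ such that v(s) = w(s - s₀) for all s ∈ ℝ. -/
theorem aux_w (p : ℝ) (hp : 2 < p)
    (w : ℝ → ℝ) (hw : ∀ s, w s = Real.cosh s ^ (-(2 / (p - 2)))) (s : ℝ) :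
    -(p - 2) ^ 2 * deriv (deriv w) s + 4 * w s - 2 * p * w s ^ (p - 1) = 0 := by
  have hp2 : p - 2 ≠ 0 := by linarith
  obtain ⟨a, ha⟩ : ∃ a, a = 2 / (p - 2) := ⟨_, rfl⟩
  have hap : a * (p - 2) = 2 := by rw [ha]; field_simp
  rw [← ha] at hw
  have hwf : w = fun s => Real.cosh s ^ (-a) := funext hw
  have h1 : deriv w = fun s => Real.sinh s * (-a) * Real.cosh s ^ (-a - 1) := by
    funext t
    rw [hwf]
    exact ((Real.hasDerivAt_cosh t).rpow_const (Or.inl (Real.cosh_pos t).ne')).deriv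
  have hc := Real.cosh_pos s
  have h2 : deriv (deriv w) s = Real.cosh s * (-a) * Real.cosh s ^ (-a - 1)
      + Real.sinh s * (-a) * (Real.sinh s * (-a - 1) * Real.cosh s ^ (-a - 1 - 1)) := by
    rw [h1]
    exact (((Real.hasDerivAt_sinh s).mul_const (-a)).mul
      ((Real.hasDerivAt_cosh s).rpow_const (Or.inl hc.ne'))).deriv
  have e1 : Real.cosh s ^ (-a - 1) = Real.cosh s ^ (-a) / Real.cosh s :=
    Real.rpow_sub_one hc.ne' _
  have e2 : Real.cosh s ^ (-a - 1 - 1) = Real.cosh s ^ (-a) / Real.cosh s / Real.cosh s := by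
    rw [Real.rpow_sub_one hc.ne', e1]
  have e3 : w s ^ (p - 1) = Real.cosh s ^ (-a) / Real.cosh s / Real.cosh s := by
    rw [← e2, hw, ← Real.rpow_mul hc.le]
    congr 1
    linear_combination -hap
  have hs : Real.sinh s ^ 2 = Real.cosh s ^ 2 - 1 := by
    have := Real.cosh_sq s; linarith
  rw [h2, e3, e2, e1, hw]
  generalize Real.cosh s ^ (-a) = A
  generalize Real.cosh s = c at *
  generalize Real.sinh s = d at *
  have hpp : p = 2 / a + 2 := by
    have : a ≠ 0 := by rintro rfl; simp at hap
    field_simp; linarith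
  have : a ≠ 0 := by rintro rfl; simp at hap
  have : -(p - 2) ^ 2 * (c * -a * (A / c) + d * -a * (d * (-a - 1) * (A / c / c))) + 4 * A -
      2 * p * (A / c / c) = -(p - 2) ^ 2 * (c * -a * (A / c) + d ^ 2 * (a * (a + 1) * (A / c / c))) + 4 * A -
      2 * p * (A / c / c) := by ring
  rw [this, hs, hpp]
  field_simp
  ring

theorem aux_v (p : ℝ) (hp : 2 < p) (v : ℝ → ℝ) (hC : ContDiff ℝ 2 v) (hv : ∀ s, 0 < v s)
    (hode : ∀ s, -(p - 2) ^ 2 * deriv (deriv v) s + 4 * v s - 2 * p * v s ^ (p - 1) = 0)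
    (hlim : Filter.Tendsto v (Filter.cocompact ℝ) (nhds 0)) :
    ∃ s₀ : ℝ, ∀ s, v s = Real.cosh (s - s₀) ^ (-(2 / (p - 2))) := by
  have hd0 : ∀ s, HasDerivAt v (deriv v s) s := fun s =>
    (hC.differentiable (by norm_num) s).hasDerivAt
  have hC1 : ContDiff ℝ 1 (deriv v) := by
    have : ContDiff ℝ (1 + 1) v := by convert hC using 1; norm_num
    exact (contDiff_succ_iff_deriv.1 this).2.2
  have hd1 : ∀ s, HasDerivAt (deriv v) (deriv (deriv v) s) s := fun s =>
    (hC1.differentiable (by norm_num) s).hasDerivAt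
  -- energy
  let E : ℝ → ℝ := fun s => (p - 2) ^ 2 * (deriv v s) ^ 2 - 4 * v s ^ 2 + 4 * v s ^ p
  have hE : ∀ s, HasDerivAt E 0 s := by
    intro s
    have h := ((((hd1 s).pow 2).const_mul ((p - 2) ^ 2)).sub (((hd0 s).pow 2).const_mul 4)).add
      (((hd0 s).rpow_const (p := p) (Or.inl (hv s).ne')).const_mul 4)
    refine h.congr_deriv ?_
    have := hode s
    simp only [Nat.cast_ofNat, Nat.add_one_sub_one, pow_one]
    linear_combination (-(2 * deriv v s)) * this
  have hEc : ∀ s t, E s = E t := fun s t =>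
    is_const_of_deriv_eq_zero (fun x => (hE x).differentiableAt) (fun x => (hE x).deriv) s t
  have hTop : Filter.Tendsto v Filter.atTop (nhds 0) :=
    hlim.mono_left atTop_le_cocompact
  have hE0 : ∀ s, E s = 0 := by
    have hx : ∀ n : ℕ, ∃ x : ℝ, (n : ℝ) < x ∧ deriv v x = v (n + 1) - v n := by
      intro n
      obtain ⟨x, hx, hx'⟩ := exists_deriv_eq_slope v (a := (n : ℝ)) (b := n + 1) (by linarith)
        hC.continuous.continuousOn (hC.differentiable (by norm_num)).differentiableOn
      refine ⟨x, hx.1, ?_⟩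
      rw [hx']; simp
    choose x hx hx' using hx
    have hxt : Filter.Tendsto x Filter.atTop Filter.atTop :=
      Filter.tendsto_atTop_mono (fun n => (hx n).le) tendsto_natCast_atTop_atTop
    have hvx := hTop.comp hxt
    have hdx : Filter.Tendsto (fun n => deriv v (x n)) Filter.atTop (nhds 0) := by
      simp only [hx']
      have a1 := hTop.comp (tendsto_natCast_atTop_atTop (R := ℝ))
      have a2 := hTop.comp (Filter.tendsto_atTop_add_const_right _ (1 : ℝ)
        (tendsto_natCast_atTop_atTop (R := ℝ)))
      simpa using a2.sub a1
    have hpw : Filter.Tendsto (fun n => v (x n) ^ p) Filter.atTop (nhds 0) := by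
      have := hvx.rpow_const (p := p) (Or.inr (by linarith))
      rwa [Real.zero_rpow (by linarith)] at this
    have hEx : Filter.Tendsto (fun n => E (x n)) Filter.atTop (nhds 0) := by
      have := (((hdx.pow 2).const_mul ((p - 2) ^ 2)).sub ((hvx.pow 2).const_mul 4)).add
        (hpw.const_mul 4)
      simpa [E] using this
    intro s
    have h2 : Filter.Tendsto (fun n => E (x n)) Filter.atTop (nhds (E s)) := by
      simp only [fun n => hEc (x n) s]
      exact tendsto_const_nhds
    exact tendsto_nhds_unique h2 hEx
  obtain ⟨s₀, hs₀⟩ : ∃ s₀, ∀ y, v y ≤ v s₀ :=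
    hC.continuous.exists_forall_ge' 0
      ((hlim.eventually (gt_mem_nhds (hv 0))).mono fun _ h => le_of_lt h)
  have hds₀ : deriv v s₀ = 0 :=
    IsLocalMax.deriv_eq_zero (Filter.Eventually.of_forall hs₀)
  have hp2 : p - 2 ≠ 0 := by linarith
  obtain ⟨b, hb⟩ : ∃ b, b = (p - 2) / 2 := ⟨_, rfl⟩
  have hpb : p = 2 * b + 2 := by rw [hb]; ring
  have hb0 : 0 < b := by rw [hb]; linarith
  have epow : ∀ s, v s ^ p = v s ^ 2 * v s ^ (p - 2) := fun s => by
    rw [← Real.rpow_natCast, ← Real.rpow_add (hv s)]; congr 1; push_cast; ring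
  have epow1 : ∀ s, v s ^ (p - 1) = v s * v s ^ (p - 2) := fun s => by
    rw [← Real.rpow_one_add' (hv s).le (by linarith)]; congr 1; ring
  have hv1 : v s₀ = 1 := by
    have h := hE0 s₀
    simp only [E, hds₀, epow] at h
    have hq : v s₀ ^ (p - 2) = 1 := by
      have : v s₀ ^ 2 * (v s₀ ^ (p - 2) - 1) = 0 := by linarith
      rcases mul_eq_zero.1 this with h | h
      · exact absurd h (pow_pos (hv s₀) 2).ne'
      · linarith
    exact (Real.rpow_left_inj (hv s₀).le zero_le_one hp2).1 (by rw [hq, Real.one_rpow])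
  -- linearization
  let u : ℝ → ℝ := fun s => v s ^ (-b)
  let u' : ℝ → ℝ := fun s => deriv v s * (-b) * v s ^ (-b - 1)
  have hu : ∀ s, HasDerivAt u (u' s) s := fun s =>
    (hd0 s).rpow_const (Or.inl (hv s).ne')
  have hu' : ∀ s, HasDerivAt u' (u s) s := by
    intro s
    have h := ((hd1 s).mul_const (-b)).mul
      ((hd0 s).rpow_const (p := -b - 1) (Or.inl (hv s).ne'))
    refine h.congr_deriv ?_
    have e1 : v s ^ (-b - 1) = v s ^ (-b) / v s := Real.rpow_sub_one (hv s).ne' _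
    have e2 : v s ^ (-b - 1 - 1) = v s ^ (-b) / v s / v s := by
      rw [Real.rpow_sub_one (hv s).ne', e1]
    have h1 := hE0 s
    have h2 := hode s
    simp only [E, epow] at h1
    rw [epow1] at h2
    simp only [u]
    rw [e1, e2]
    have h0 := (hv s).ne'
    generalize v s ^ (p - 2) = Q at *
    generalize v s ^ (-b) = A at *
    generalize deriv (deriv v) s = v2 at *
    generalize deriv v s = v1 at *
    generalize v s = v0 at *
    subst hpb
    have k1 : v1 ^ 2 = (v0 ^ 2 - v0 ^ 2 * Q) / b ^ 2 := by
      field_simp; linarith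
    have k2 : v2 = (v0 - (b + 1) * (v0 * Q)) / b ^ 2 := by
      field_simp; linarith
    have : v2 * -b * (A / v0) + v1 * -b * (v1 * (-b - 1) * (A / v0 / v0))
      = v2 * -b * (A / v0) + v1 ^ 2 * (b * (b + 1) * (A / v0 / v0)) := by ring
    rw [this, k1, k2]
    field_simp
    ring
  have hu0 : u s₀ = 1 := by simp [u, hv1]
  have hu0' : u' s₀ = 0 := by simp [u', hds₀]
  have hF : ∀ s, HasDerivAt (fun s => (u s + u' s) * Real.exp (-(s - s₀))) 0 s := by
    intro s
    have h := ((hu s).add (hu' s)).mul (((hasDerivAt_id s).sub_const s₀).neg.exp)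
    refine h.congr_deriv ?_
    simp; ring
  have hG : ∀ s, HasDerivAt (fun s => (u s - u' s) * Real.exp (s - s₀)) 0 s := by
    intro s
    have h := ((hu s).sub (hu' s)).mul (((hasDerivAt_id s).sub_const s₀).exp)
    refine h.congr_deriv ?_
    simp; ring
  refine ⟨s₀, fun s => ?_⟩
  have f1 := is_const_of_deriv_eq_zero (fun x => (hF x).differentiableAt) (fun x => (hF x).deriv) s s₀
  have g1 := is_const_of_deriv_eq_zero (fun x => (hG x).differentiableAt) (fun x => (hG x).deriv) s s₀
  simp only [hu0, hu0', sub_self, neg_zero, Real.exp_zero, add_zero, sub_zero, mul_one] at f1 g1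
  have hus : u s = Real.cosh (s - s₀) := by
    rw [Real.cosh_eq]
    have hm : Real.exp (s - s₀) * Real.exp (-(s - s₀)) = 1 := by
      rw [← Real.exp_add]; simp
    linear_combination (Real.exp (s - s₀) * f1 + Real.exp (-(s - s₀)) * g1) / 2 - u s * hm
  rw [← hus]
  simp only [u]
  rw [← Real.rpow_mul (hv s).le]
  have : -b * -(2 / (p - 2)) = 1 := by rw [hb]; field_simp
  rw [this, Real.rpow_one]

/-- For `p > 2`, `w(s) = (cosh s)^{-2/(p-2)}` is a positive solution of
`-(p-2)² w'' + 4 w - 2p w^{p-1} = 0` on `ℝ`, and every positive `C²` solution tending to `0`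
at infinity is a translate of `w`. -/
theorem statement2 (p : ℝ) (hp : 2 < p)
    (w : ℝ → ℝ) (hw : ∀ s, w s = Real.cosh s ^ (-(2 / (p - 2)))) :
    (∀ s, 0 < w s) ∧
    (∀ s, -(p - 2) ^ 2 * deriv (deriv w) s + 4 * w s - 2 * p * w s ^ (p - 1) = 0) ∧
    (∀ v : ℝ → ℝ, ContDiff ℝ 2 v → (∀ s, 0 < v s) →
      (∀ s, -(p - 2) ^ 2 * deriv (deriv v) s + 4 * v s - 2 * p * v s ^ (p - 1) = 0) →
      Filter.Tendsto v (Filter.cocompact ℝ) (nhds 0) →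
      ∃ s₀ : ℝ, ∀ s, v s = w (s - s₀)) := by
  refine ⟨fun s => ?_, aux_w p hp w hw, fun v hC hv hode hlim => ?_⟩
  · rw [hw]; exact Real.rpow_pos_of_pos (Real.cosh_pos s) _
  · obtain ⟨s₀, h⟩ := aux_v p hp v hC hv hode hlim
    exact ⟨s₀, fun s => by rw [hw]; exact h s⟩
end

section
/- Let p > 2, θ ∈ (0,1] with (2θ-1)p + 2 > 0, and Λ > 0. Set η = (p+2)θΛ/((2θ-1)p+2), A = (p η/2)^{1/(p-2)}, B = ((p-2)/2)√(η/θ), and u_*(s) = A (cosh(B s))^{-2/(p-2)}. Then: (i) t := (∫_ℝ |u_*'|² ds)/(∫_ℝ u_*² ds) = (p-2)Λ/((2θ-1)p+2); (ii) (∫_ℝ u_*^p ds)/(∫_ℝ u_*² ds) = 2 p η/(p+2); and (iii) u_* solves -θ u_*'' + ((1-θ) t + Λ) u_* = u_*^{p-1} on ℝ. -/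
open MeasureTheory

lemma aux_int {b B : ℝ} (hb : 0 < b) (hB : 0 < B) :
    Integrable (fun s : ℝ => Real.cosh (B * s) ^ (-b)) := by
  have hc : Continuous (fun s : ℝ => Real.cosh s ^ (-b)) :=
    Real.continuous_cosh.rpow_const fun s => Or.inl (Real.cosh_pos s).ne'
  have key : ∀ s y : ℝ, Real.exp y / 2 ≤ Real.cosh s →
      ‖Real.cosh s ^ (-b)‖ ≤ (1 / 2 : ℝ) ^ (-b) * Real.exp (-b * y) := by
    intro s y h
    rw [Real.norm_of_nonneg (Real.rpow_nonneg (Real.cosh_pos s).le _)]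
    have h1 := Real.rpow_le_rpow_of_nonpos (by positivity) h (by linarith : -b ≤ 0)
    refine h1.trans (le_of_eq ?_)
    rw [show Real.exp y / 2 = (1 / 2) * Real.exp y by ring,
      Real.mul_rpow (by norm_num) (Real.exp_pos _).le, ← Real.exp_mul, mul_comm y]
  have h0 : Integrable (fun s : ℝ => Real.cosh s ^ (-b)) := by
    rw [← integrableOn_univ, ← Set.Iic_union_Ioi (a := (0 : ℝ))]
    apply IntegrableOn.union
    · refine Integrable.mono' ((integrableOn_exp_mul_Iic hb 0).const_mul ((1 / 2 : ℝ) ^ (-b)))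
        hc.aestronglyMeasurable (Filter.Eventually.of_forall fun s => ?_)
      have := key s (-s) (by rw [Real.cosh_eq]; linarith [Real.exp_pos s])
      simpa using this
    · refine Integrable.mono' ((integrableOn_exp_mul_Ioi (neg_lt_zero.2 hb) 0).const_mul
        ((1 / 2 : ℝ) ^ (-b)))
        hc.aestronglyMeasurable (Filter.Eventually.of_forall fun s => ?_)
      exact key s s (by rw [Real.cosh_eq]; linarith [Real.exp_pos (-s)])
  exact h0.comp_mul_left' hB.ne'

lemma aux_deriv (b B s : ℝ) :
    HasDerivAt (fun s : ℝ => Real.cosh (B * s) ^ (-b))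
      (-b * B * (Real.sinh (B * s) * Real.cosh (B * s) ^ (-b - 1))) s := by
  have h1 : HasDerivAt (fun s : ℝ => B * s) B s := by
    simpa using (hasDerivAt_id s).const_mul B
  have h := h1.cosh.rpow_const (p := -b) (Or.inl (Real.cosh_pos (B * s)).ne')
  convert h using 1
  ring

lemma aux_pow (b x : ℝ) : Real.cosh x ^ (-b) = Real.cosh x ^ 2 * Real.cosh x ^ (-b - 2) := by
  rw [← Real.rpow_natCast, ← Real.rpow_add (Real.cosh_pos x)]
  congr 1; push_cast; ring

lemma aux_deriv2 (b B s : ℝ) :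
    HasDerivAt (fun s : ℝ => Real.sinh (B * s) * Real.cosh (B * s) ^ (-b - 1))
      (B * (-b * Real.cosh (B * s) ^ (-b) + (b + 1) * Real.cosh (B * s) ^ (-(b + 2)))) s := by
  have h1 : HasDerivAt (fun s : ℝ => B * s) B s := by
    simpa using (hasDerivAt_id s).const_mul B
  have h := h1.sinh.mul (aux_deriv (b + 1) B s)
  have e : -(b + 1) = -b - 1 := by ring
  rw [e] at h
  refine HasDerivAt.congr_deriv (f := fun s : ℝ => Real.sinh (B * s) * Real.cosh (B * s) ^ (-b - 1)) h ?_
  have e1 : Real.cosh (B * s) ^ (-b - 1) = Real.cosh (B * s) * Real.cosh (B * s) ^ (-b - 2) := by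
    have h3 := Real.rpow_add (Real.cosh_pos (B * s)) 1 (-b - 2)
    rw [Real.rpow_one] at h3
    rw [← h3]
    congr 1; ring
  rw [aux_pow b, e1, show -(b + 2) = -b - 2 by ring, show -b - 1 - 1 = -b - 2 by ring]
  have := Real.cosh_sq (B * s)
  have h2 : Real.sinh (B * s) ^ 2 = Real.cosh (B * s) ^ 2 - 1 := by linarith
  linear_combination (-(b + 1)) * B * Real.cosh (B * s) ^ (-b - 2) * h2

lemma aux_rec {b B : ℝ} (hb : 0 < b) (hB : 0 < B) :
    (b + 1) * ∫ s : ℝ, Real.cosh (B * s) ^ (-(b + 2)) = b * ∫ s : ℝ, Real.cosh (B * s) ^ (-b) := by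
  have i1 := aux_int hb hB
  have i2 := aux_int (show 0 < b + 2 by linarith) hB
  have hF : Integrable (fun s : ℝ => Real.sinh (B * s) * Real.cosh (B * s) ^ (-b - 1)) := by
    refine Integrable.mono' i1 ?_ (Filter.Eventually.of_forall fun s => ?_)
    · exact (continuous_iff_continuousAt.2
        fun s => (aux_deriv2 b B s).continuousAt).aestronglyMeasurable
    · have hc := Real.cosh_pos (B * s)
      rw [norm_mul, Real.norm_of_nonneg (Real.rpow_nonneg hc.le (-b - 1)),
        Real.rpow_sub_one hc.ne', Real.norm_eq_abs]
      have h1 : |Real.sinh (B * s)| ≤ Real.cosh (B * s) := by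
        apply abs_le_of_sq_le_sq _ hc.le
        have := Real.cosh_sq (B * s)
        linarith
      have h2 := Real.rpow_nonneg hc.le (-b)
      rw [mul_div_assoc', div_le_iff₀ hc, mul_comm]
      exact mul_le_mul_of_nonneg_left h1 h2
  have h := integral_eq_zero_of_hasDerivAt_of_integrable (aux_deriv2 b B)
    (((i1.const_mul (-b)).add (i2.const_mul (b + 1))).const_mul B) hF
  rw [integral_const_mul, integral_add (i1.const_mul (-b)) (i2.const_mul (b + 1)),
    integral_const_mul, integral_const_mul] at h
  have := (mul_eq_zero.1 h).resolve_left hB.ne'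
  linarith

lemma aux_pos {b B : ℝ} (hb : 0 < b) (hB : 0 < B) :
    0 < ∫ s : ℝ, Real.cosh (B * s) ^ (-b) := by
  have hp : ∀ s : ℝ, 0 < Real.cosh (B * s) ^ (-b) := fun s => Real.rpow_pos_of_pos (Real.cosh_pos _) _
  rw [integral_pos_iff_support_of_nonneg (fun s => (hp s).le) (aux_int hb hB)]
  have : Function.support (fun s : ℝ => Real.cosh (B * s) ^ (-b)) = Set.univ :=
    Set.eq_univ_of_forall fun s => (hp s).ne'
  rw [this]; simp

/-- For `p > 2`, `θ ∈ (0,1]` with `(2θ-1)p+2 > 0` and `Λ > 0`, with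
`η = (p+2)θΛ/((2θ-1)p+2)`, `A = (pη/2)^{1/(p-2)}`, `B = ((p-2)/2)√(η/θ)` and
`u_*(s) = A (cosh(Bs))^{-2/(p-2)}`, one has
(i) `t := ∫ |u_*'|²/∫ u_*² = (p-2)Λ/((2θ-1)p+2)`,
(ii) `∫ u_*^p/∫ u_*² = 2pη/(p+2)`, and
(iii) `-θ u_*'' + ((1-θ)t + Λ) u_* = u_*^{p-1}` on `ℝ`. -/
theorem statement5 (p θ Λ : ℝ) (hp : 2 < p) (hθ0 : 0 < θ) (hθ1 : θ ≤ 1)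
    (hpθ : 0 < (2 * θ - 1) * p + 2) (hΛ : 0 < Λ)
    (η A B : ℝ)
    (hη : η = (p + 2) * θ * Λ / ((2 * θ - 1) * p + 2))
    (hA : A = (p * η / 2) ^ (1 / (p - 2)))
    (hB : B = (p - 2) / 2 * Real.sqrt (η / θ))
    (u : ℝ → ℝ) (hu : ∀ s, u s = A * Real.cosh (B * s) ^ (-(2 / (p - 2))))
    (t : ℝ) (ht : t = (∫ s : ℝ, deriv u s ^ 2) / ∫ s : ℝ, u s ^ 2) :
    t = (p - 2) * Λ / ((2 * θ - 1) * p + 2) ∧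
    (∫ s : ℝ, u s ^ p) / (∫ s : ℝ, u s ^ 2) = 2 * p * η / (p + 2) ∧
    (∀ s, -θ * deriv (deriv u) s + ((1 - θ) * t + Λ) * u s = u s ^ (p - 1)) := by
  have hp2 : 0 < p - 2 := by linarith
  have hηpos : 0 < η := by rw [hη]; positivity
  have hηθ : 0 < η / θ := by positivity
  have hBpos : 0 < B := by rw [hB]; have := Real.sqrt_pos.2 hηθ; positivity
  have hApos : 0 < A := by rw [hA]; positivity
  obtain ⟨a, ha⟩ : ∃ a, a = 2 / (p - 2) := ⟨_, rfl⟩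
  have hapos : 0 < a := by rw [ha]; positivity
  have hap : a * (p - 2) = 2 := by rw [ha]; field_simp
  have haB : a ^ 2 * B ^ 2 = η / θ := by
    rw [hB, mul_pow, Real.sq_sqrt hηθ.le, ha]; field_simp
  have hAp : A ^ (p - 2) = p * η / 2 := by
    rw [hA, ← Real.rpow_mul (by positivity), one_div_mul_cancel hp2.ne', Real.rpow_one]
  rw [← ha] at hu
  have hufun : u = fun s => A * Real.cosh (B * s) ^ (-a) := funext hu
  have hd1 : deriv u = fun s => A * (-a * B * (Real.sinh (B * s) * Real.cosh (B * s) ^ (-a - 1))) := by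
    funext s
    rw [hufun]
    exact ((aux_deriv a B s).const_mul A).deriv
  have hd2 : ∀ s, deriv (deriv u) s = A * (-a * B * (B * (-a * Real.cosh (B * s) ^ (-a)
      + (a + 1) * Real.cosh (B * s) ^ (-(a + 2))))) := by
    intro s
    rw [hd1]
    exact (((aux_deriv2 a B s).const_mul (-a * B)).const_mul A).deriv
  obtain ⟨J, hJ⟩ : ∃ J, J = ∫ s : ℝ, Real.cosh (B * s) ^ (-(2 * a)) := ⟨_, rfl⟩
  obtain ⟨K, hK⟩ : ∃ K, K = ∫ s : ℝ, Real.cosh (B * s) ^ (-(2 * a + 2)) := ⟨_, rfl⟩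
  have h2a : 0 < 2 * a := by linarith
  have hJpos : 0 < J := hJ ▸ aux_pos h2a hBpos
  have hrec : (2 * a + 1) * K = 2 * a * J := by rw [hJ, hK]; exact aux_rec h2a hBpos
  have hKJ : K = 4 / (p + 2) * J := by
    have h1 : (p - 2) * ((2 * a + 1) * K) = (p - 2) * (2 * a * J) := by rw [hrec]
    have h2 : (p + 2) * K = 4 * J := by linear_combination h1 + (2 * J - 2 * K) * hap
    have : p + 2 ≠ 0 := by linarith
    field_simp; linarith
  have hu2 : ∫ s : ℝ, u s ^ 2 = A ^ 2 * J := by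
    rw [hJ, ← integral_const_mul]
    congr 1; funext s
    rw [hu, mul_pow, ← Real.rpow_natCast (Real.cosh (B * s) ^ (-a)),
      ← Real.rpow_mul (Real.cosh_pos _).le]
    congr 2; push_cast; ring
  have hup : ∫ s : ℝ, u s ^ p = A ^ 2 * (p * η / 2) * K := by
    rw [hK, ← integral_const_mul]
    congr 1; funext s
    rw [hu, Real.mul_rpow hApos.le (Real.rpow_nonneg (Real.cosh_pos _).le _),
      ← Real.rpow_mul (Real.cosh_pos _).le, ← hAp, ← Real.rpow_natCast A 2, ← Real.rpow_add hApos]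
    congr 2
    · push_cast; ring
    · linarith
  have hdu : ∫ s : ℝ, deriv u s ^ 2 = A ^ 2 * (η / θ) * (J - K) := by
    rw [hJ, hK, ← integral_sub (aux_int h2a hBpos) (aux_int (by linarith) hBpos),
      ← integral_const_mul]
    congr 1; funext s
    have hc := Real.cosh_pos (B * s)
    have e1 : (Real.cosh (B * s) ^ (-a - 1)) ^ 2 = Real.cosh (B * s) ^ (-(2 * a) - 2) := by
      rw [← Real.rpow_natCast, ← Real.rpow_mul hc.le]
      congr 1; push_cast; ring
    rw [hd1, ← haB, aux_pow (2 * a), show -(2 * a + 2) = -(2 * a) - 2 by ring, ← e1]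
    have := Real.cosh_sq (B * s)
    rw [this]; ring
  have hAJ : A ^ 2 * J ≠ 0 := by positivity
  have hpp : p + 2 ≠ 0 := by linarith
  have htt : t = (p - 2) * Λ / ((2 * θ - 1) * p + 2) := by
    rw [ht, hdu, hu2, hKJ]
    have : A ^ 2 * (η / θ) * (J - 4 / (p + 2) * J) = (A ^ 2 * J) * ((η / θ) * ((p - 2) / (p + 2))) := by
      field_simp; ring
    rw [this, mul_div_cancel_left₀ _ hAJ, hη]
    have := hpθ.ne'
    field_simp
  refine ⟨htt, ?_, ?_⟩
  · rw [hup, hu2, hKJ]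
    have : A ^ 2 * (p * η / 2) * (4 / (p + 2) * J) = (A ^ 2 * J) * (2 * p * η / (p + 2)) := by
      field_simp; ring
    rw [this, mul_div_cancel_left₀ _ hAJ]
  · intro s
    have hcoef : (1 - θ) * t + Λ = η := by
      rw [htt, hη]
      have := hpθ.ne'
      rw [eq_div_iff this, add_mul, mul_assoc, div_mul_cancel₀ _ this]; ring
    have hcc : θ * ((a + 1) * a * B ^ 2) = p * η / 2 := by
      have h1 : θ * (a ^ 2 * B ^ 2) = η := by rw [haB]; field_simp
      have h2 : a * ((a + 1) * a * B ^ 2 * θ) = a * (p * η / 2) := by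
        linear_combination (a + 1) * h1 - η / 2 * hap
      have := mul_left_cancel₀ hapos.ne' h2
      linarith
    have hr : u s ^ (p - 1) = A * (p * η / 2) * Real.cosh (B * s) ^ (-(a + 2)) := by
      rw [hu, Real.mul_rpow hApos.le (Real.rpow_nonneg (Real.cosh_pos _).le _),
        ← Real.rpow_mul (Real.cosh_pos _).le, ← hAp]
      have h3 := Real.rpow_add hApos 1 (p - 2)
      rw [Real.rpow_one] at h3
      rw [← h3]
      congr 2
      · ring
      · linarith
    have h1 : θ * (a ^ 2 * B ^ 2) = η := by rw [haB]; field_simp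
    rw [hr, hcoef, hd2, hu]
    linear_combination A * Real.cosh (B * s) ^ (-(a + 2)) * hcc - A * Real.cosh (B * s) ^ (-a) * h1
end

section
/- Let p > 2, w(s) = (cosh s)^{-2/(p-2)}, and χ(s) = -((p-2)/(4(p-1))) (2 w(s) - w(s)^{p-1}). Then χ solves -χ'' + (4/(p-2)²) χ - (2p(p-1)/((p-2)² (cosh s)²)) χ - w^{2p-3} = 0 on ℝ. -/
lemma hd_cosh_rpow (m s : ℝ) :
    HasDerivAt (fun t => Real.cosh t ^ m) (m * Real.cosh s ^ (m - 1) * Real.sinh s) s := by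
  have h := (Real.hasDerivAt_cosh s).rpow_const (p := m) (Or.inl (Real.cosh_pos s).ne')
  convert h using 1
  ring

lemma hd2_cosh_rpow (m s : ℝ) :
    HasDerivAt (fun t => m * Real.cosh t ^ (m - 1) * Real.sinh t)
      (m ^ 2 * Real.cosh s ^ m - m * (m - 1) * Real.cosh s ^ (m - 2)) s := by
  have h := ((hd_cosh_rpow (m - 1) s).const_mul m).mul (Real.hasDerivAt_sinh s)
  refine h.congr_deriv ?_
  have hc := Real.cosh_pos s
  have e0 : Real.cosh s ^ m = Real.cosh s ^ (m - 2) * Real.cosh s ^ 2 := by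
    rw [← Real.rpow_natCast, ← Real.rpow_add hc]; congr 1; push_cast; ring
  have e1 : Real.cosh s ^ (m - 1) = Real.cosh s ^ (m - 2) * Real.cosh s := by
    rw [← Real.rpow_add_one hc.ne']; congr 1; ring
  have e2 : m - 1 - 1 = m - 2 := by ring
  rw [e2, e0, e1]
  have := Real.sinh_sq s
  linear_combination (m * (m - 1) * Real.cosh s ^ (m - 2)) * this

/-- For `p > 2`, `w(s) = (cosh s)^{-2/(p-2)}` and
`χ(s) = -((p-2)/(4(p-1)))(2w(s) - w(s)^{p-1})`, the function `χ` solves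
`-χ'' + (4/(p-2)²) χ - (2p(p-1)/((p-2)²cosh²s)) χ - w^{2p-3} = 0` on `ℝ`. -/
theorem statement10 (p : ℝ) (hp : 2 < p)
    (w : ℝ → ℝ) (hw : ∀ s, w s = Real.cosh s ^ (-(2 / (p - 2))))
    (χ : ℝ → ℝ) (hχ : ∀ s, χ s = -((p - 2) / (4 * (p - 1))) * (2 * w s - w s ^ (p - 1))) :
    ∀ s, -(deriv (deriv χ) s) + 4 / (p - 2) ^ 2 * χ s -
        2 * p * (p - 1) / ((p - 2) ^ 2 * Real.cosh s ^ 2) * χ s -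
        w s ^ (2 * p - 3) = 0 := by
  intro s
  obtain ⟨a, ha⟩ : ∃ a, a = 2 / (p - 2) := ⟨_, rfl⟩
  have hp2 : 0 < p - 2 := by linarith
  have ha0 : 0 < a := by rw [ha]; positivity
  have hpa : p = 2 + 2 / a := by rw [ha]; field_simp; ring
  rw [← ha] at hw
  have w1 : ∀ t, w t ^ (p - 1) = Real.cosh t ^ (-a - 2) := by
    intro t
    rw [hw, ← Real.rpow_mul (Real.cosh_pos t).le]
    congr 1; rw [hpa]; field_simp; ring
  have w2 : w s ^ (2 * p - 3) = Real.cosh s ^ (-a - 4) := by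
    rw [hw, ← Real.rpow_mul (Real.cosh_pos s).le]
    congr 1; rw [hpa]; field_simp; ring
  have hK : -((p - 2) / (4 * (p - 1))) = -(1 / (2 * (a + 2))) := by
    have : p - 1 = (a + 2) / a := by rw [hpa]; field_simp; ring
    have h' : p - 2 = 2 / a := by rw [hpa]; ring
    rw [this, h']; field_simp; norm_num
  have hχ' : χ = fun t => -(1 / (2 * (a + 2))) *
      (2 * Real.cosh t ^ (-a) - Real.cosh t ^ (-a - 2)) := by
    funext t; rw [hχ, w1, hw, hK]
  have d1 : deriv χ = fun t => -(1 / (2 * (a + 2))) *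
      (2 * (-a * Real.cosh t ^ (-a - 1) * Real.sinh t)
        - (-a - 2) * Real.cosh t ^ (-a - 2 - 1) * Real.sinh t) := by
    funext t; rw [hχ']
    exact ((((hd_cosh_rpow (-a) t).const_mul 2).sub (hd_cosh_rpow (-a - 2) t)).const_mul _).deriv
  have d2 := ((((hd2_cosh_rpow (-a) s).const_mul 2).sub
    (hd2_cosh_rpow (-a - 2) s)).const_mul (-(1 / (2 * (a + 2))))).deriv
  have d3 := (congrArg (fun f => deriv f s) d1).trans d2
  beta_reduce at d3
  rw [d3, w2, hχ']
  have hc := Real.cosh_pos s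
  have c1 : 4 / (p - 2) ^ 2 = a ^ 2 := by rw [ha]; field_simp; norm_num
  have c2 : 2 * p * (p - 1) / ((p - 2) ^ 2 * Real.cosh s ^ 2)
      = (a + 1) * (a + 2) / Real.cosh s ^ 2 := by
    have h1 : p - 1 = (a + 2) / a := by rw [hpa]; field_simp; ring
    have h2 : p - 2 = 2 / a := by rw [hpa]; ring
    have h3 : p = 2 * (a + 1) / a := by rw [hpa]; field_simp
    rw [h1, h2, h3]; field_simp
  have e4 : -a - 2 - 2 = -a - 4 := by ring
  have e2 : Real.cosh s ^ (-a - 2) = Real.cosh s ^ (-a - 4) * Real.cosh s ^ 2 := by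
    rw [← Real.rpow_natCast, ← Real.rpow_add hc]; congr 1; push_cast; ring
  have e0 : Real.cosh s ^ (-a) = Real.cosh s ^ (-a - 4) * Real.cosh s ^ 4 := by
    rw [← Real.rpow_natCast, ← Real.rpow_add hc]; congr 1; push_cast; ring
  rw [c1, c2, e4]
  beta_reduce
  rw [e2, e0]
  generalize Real.cosh s ^ (-a - 4) = X
  have : a + 2 ≠ 0 := by positivity
  field_simp
  ring
end

section
/- Let p > 2, w(s) = (cosh s)^{-2/(p-2)}, and χ(s) = -((p-2)/(4(p-1))) (2 w(s) - w(s)^{p-1}). Then ∫_ℝ χ(s) w(s)^{p-1} ds = -((p-2)/(3p-2)) ∫_ℝ w(s)^p ds. -/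
open MeasureTheory

lemma cosh_int (a : ℝ) (ha : 2 ≤ a) : Integrable (fun s : ℝ => Real.cosh s ^ (-a)) := by
  refine integrable_inv_one_add_sq.mono' ?_ (Filter.Eventually.of_forall fun s => ?_)
  · refine Continuous.aestronglyMeasurable ?_
    exact Real.continuous_cosh.rpow_const fun s => Or.inl (Real.cosh_pos s).ne'
  · have hc := Real.cosh_pos s
    rw [Real.norm_of_nonneg (by positivity)]
    calc Real.cosh s ^ (-a) ≤ Real.cosh s ^ (-2 : ℝ) :=
          Real.rpow_le_rpow_of_exponent_le (Real.one_le_cosh s) (by linarith)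
      _ = (Real.cosh s ^ 2)⁻¹ := by
          rw [Real.rpow_neg hc.le]; norm_num
      _ ≤ (1 + s ^ 2)⁻¹ := by
          apply inv_anti₀ (by positivity)
          have h1 : s ^ 2 ≤ Real.sinh s ^ 2 := by
            rw [sq_le_sq, Real.abs_sinh]
            exact Real.self_le_sinh_iff.2 (abs_nonneg s)
          rw [Real.cosh_sq]; linarith

lemma cosh_rec (a : ℝ) (ha : 2 ≤ a) :
    (a + 1) * ∫ s : ℝ, Real.cosh s ^ (-(a + 2)) = a * ∫ s : ℝ, Real.cosh s ^ (-a) := by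
  have i1 := cosh_int a ha
  have i2 := cosh_int (a + 2) (by linarith)
  have hd : ∀ s : ℝ, HasDerivAt (fun s => Real.sinh s * Real.cosh s ^ (-a - 1))
      ((a + 1) * Real.cosh s ^ (-(a + 2)) - a * Real.cosh s ^ (-a)) s := by
    intro s
    have hc := Real.cosh_pos s
    have h := (Real.hasDerivAt_sinh s).mul
      ((Real.hasDerivAt_cosh s).rpow_const (p := -a - 1) (Or.inl hc.ne'))
    refine h.congr_deriv ?_
    have e1 : Real.cosh s ^ (-a - 1) = Real.cosh s ^ (-(a + 2)) * Real.cosh s := by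
      rw [← Real.rpow_add_one hc.ne']; congr 1; ring
    have e2 : Real.cosh s ^ (-a) = Real.cosh s ^ (-(a + 2)) * Real.cosh s ^ 2 := by
      rw [← Real.rpow_add_natCast hc.ne']; congr 1; push_cast; ring
    have e3 : -a - 1 - 1 = -(a + 2) := by ring
    rw [e3, e1, e2]
    linear_combination (a + 1) * Real.cosh s ^ (-(a + 2)) * (Real.cosh_sq s)
  have hi : Integrable (fun s => Real.sinh s * Real.cosh s ^ (-a - 1)) := by
    refine i1.mono' ?_ (Filter.Eventually.of_forall fun s => ?_)
    · exact (Real.continuous_sinh.mul (Real.continuous_cosh.rpow_const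
        fun s => Or.inl (Real.cosh_pos s).ne')).aestronglyMeasurable
    · have hc := Real.cosh_pos s
      have e1 : Real.cosh s ^ (-a) = Real.cosh s * Real.cosh s ^ (-a - 1) := by
        rw [mul_comm, ← Real.rpow_add_one hc.ne']; congr 1; ring
      have hp : 0 ≤ Real.cosh s ^ (-a - 1) := by positivity
      rw [norm_mul, Real.norm_of_nonneg hp, e1]
      refine mul_le_mul_of_nonneg_right ?_ hp
      rw [Real.norm_eq_abs]
      refine abs_le_of_sq_le_sq ?_ hc.le
      rw [Real.cosh_sq]; linarith
  have := integral_eq_zero_of_hasDerivAt_of_integrable hd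
    ((i2.const_mul _).sub (i1.const_mul _)) hi
  rw [integral_sub (i2.const_mul _) (i1.const_mul _), integral_const_mul,
    integral_const_mul] at this
  linarith

/-- For `p > 2`, `w(s) = (cosh s)^{-2/(p-2)}` and
`χ(s) = -((p-2)/(4(p-1)))(2w - w^{p-1})`, one has
`∫ χ w^{p-1} = -((p-2)/(3p-2)) ∫ w^p`. -/
theorem statement12 (p : ℝ) (hp : 2 < p)
    (w : ℝ → ℝ) (hw : ∀ s, w s = Real.cosh s ^ (-(2 / (p - 2))))
    (χ : ℝ → ℝ) (hχ : ∀ s, χ s = -((p - 2) / (4 * (p - 1))) * (2 * w s - w s ^ (p - 1))) :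
    (∫ s : ℝ, χ s * w s ^ (p - 1)) = -((p - 2) / (3 * p - 2)) * ∫ s : ℝ, w s ^ p := by
  have h2 : 0 < p - 2 := by linarith
  have h1 : 0 < p - 1 := by linarith
  have h3 : 0 < 3 * p - 2 := by linarith
  obtain ⟨a, ha⟩ : ∃ a, a = 2 * p / (p - 2) := ⟨_, rfl⟩
  have ha2 : 2 ≤ a := by rw [ha, le_div_iff₀ h2]; linarith
  have e1 : ∀ s, w s ^ p = Real.cosh s ^ (-a) := by
    intro s
    rw [hw, ← Real.rpow_mul (Real.cosh_pos s).le, ha]; congr 1; ring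
  have e2 : ∀ s, χ s * w s ^ (p - 1) = -((p - 2) / (4 * (p - 1))) *
      (2 * Real.cosh s ^ (-a) - Real.cosh s ^ (-(a + 2))) := by
    intro s
    have hc := Real.cosh_pos s
    have hwp : 0 < w s := by rw [hw]; positivity
    have f1 : w s * w s ^ (p - 1) = Real.cosh s ^ (-a) := by
      rw [← e1, mul_comm, ← Real.rpow_add_one hwp.ne']; congr 1; ring
    have f2 : w s ^ (p - 1) * w s ^ (p - 1) = Real.cosh s ^ (-(a + 2)) := by
      rw [← Real.rpow_add hwp, hw, ← Real.rpow_mul hc.le, ha]; congr 1; field_simp; ring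
    rw [hχ, ← f1, ← f2]; ring
  have i1 := cosh_int a ha2
  have i2 := cosh_int (a + 2) (by linarith)
  have hr := cosh_rec a ha2
  simp_rw [e2, e1]
  rw [integral_const_mul, integral_sub (i1.const_mul _) i2, integral_const_mul]
  have hJ : (∫ s : ℝ, Real.cosh s ^ (-(a + 2))) =
      2 * p / (3 * p - 2) * ∫ s : ℝ, Real.cosh s ^ (-a) := by
    have hk : 2 * p / (3 * p - 2) = a / (a + 1) := by
      have : a + 1 = (3 * p - 2) / (p - 2) := by rw [ha]; field_simp; ring
      rw [this, ha]; field_simp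
    rw [hk, div_mul_eq_mul_div, eq_div_iff (by linarith)]; linarith
  rw [hJ]
  generalize (∫ s : ℝ, Real.cosh s ^ (-a)) = I
  have h3n := h3.ne'
  have h1n := h1.ne'
  obtain ⟨d, hd⟩ : ∃ d, d = 3 * p - 2 := ⟨_, rfl⟩
  rw [← hd] at h3n ⊢
  have key : 2 * I - 2 * p / d * I = 4 * (p - 1) / d * I := by
    field_simp
    rw [hd]; ring
  rw [key]
  field_simp
end

section
/- For every real p > 2 and every integer d ≥ 2, with U₀(p) = 2p(p-1)/(p-2)², the quantity σ(p,d) = (1/2)√(1 + 4 U₀(p)) - 1/2 - U₀(p) + (2/(p-2)²) (2 + d(p²-4)/(d-1)) satisfies σ(p,d) > 1. -/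
/-- For every real `p > 2` and integer `d ≥ 2`, with
`U₀(p) = 2p(p-1)/(p-2)²`, the quantity
`σ(p,d) = (1/2)√(1+4U₀(p)) - 1/2 - U₀(p) + (2/(p-2)²)(2 + d(p²-4)/(d-1))` is larger than `1`. -/
theorem statement14 (p : ℝ) (hp : 2 < p) (d : ℕ) (hd : 2 ≤ d)
    (U₀ σ : ℝ)
    (hU₀ : U₀ = 2 * p * (p - 1) / (p - 2) ^ 2)
    (hσ : σ = 1 / 2 * Real.sqrt (1 + 4 * U₀) - 1 / 2 - U₀ +
      2 / (p - 2) ^ 2 * (2 + d * (p ^ 2 - 4) / ((d : ℝ) - 1))) :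
    1 < σ := by
  have hq : 0 < p - 2 := by linarith
  have hd' : (2 : ℝ) ≤ d := by exact_mod_cast hd
  have hd1 : 0 < (d : ℝ) - 1 := by linarith
  have hs : Real.sqrt (1 + 4 * U₀) = (3 * p - 2) / (p - 2) := by
    have h : 1 + 4 * U₀ = ((3 * p - 2) / (p - 2)) ^ 2 := by
      rw [hU₀]
      field_simp
      ring
    rw [h]
    exact Real.sqrt_sq (div_nonneg (by linarith) hq.le)
  have hp4 : 0 < p ^ 2 - 4 := by nlinarith
  have h1 : p ^ 2 - 4 < d * (p ^ 2 - 4) / ((d : ℝ) - 1) := by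
    rw [lt_div_iff₀ hd1]
    nlinarith
  have h2 : 2 / (p - 2) ^ 2 * (2 + (p ^ 2 - 4)) <
      2 / (p - 2) ^ 2 * (2 + d * (p ^ 2 - 4) / ((d : ℝ) - 1)) := by
    apply mul_lt_mul_of_pos_left _ (by positivity)
    linarith
  have h3 : 1 / 2 * ((3 * p - 2) / (p - 2)) - 1 / 2 - U₀ +
      2 / (p - 2) ^ 2 * (2 + (p ^ 2 - 4)) = 1 + 4 / (p - 2) := by
    rw [hU₀]
    field_simp
    ring
  have h4 : 0 < 4 / (p - 2) := by positivity
  rw [hσ, hs]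
  linarith
end

section
/- Let p > 2 and μ > 0, and let u = u_{μ,*} with u_{μ,*}(s) = (p μ / 2)^{1/(p-2)} (cosh(((p-2)/2) √μ s))^{-2/(p-2)}. Then: (i) (∫_ℝ |u'|² ds)/(∫_ℝ u² ds) = (p-2) μ/(p+2); (ii) (∫_ℝ u^p ds)/(∫_ℝ u² ds) = 2 p μ/(p+2); and (iii) (∫_ℝ u² ds)/(∫_ℝ u^p ds)^{2/p} = κ_p μ^{-(p-2)/(2p)}, where κ_p = ((p+2)/4)^{2/p} ( (2√π/(p-2)) Γ(2/(p-2)) / Γ(2/(p-2) + 1/2) )^{(p-2)/p}. -/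
open MeasureTheory

lemma aux_beta (b : ℝ) (hb : 0 < b) :
    ∫ x in Set.Ioo (0:ℝ) 1, x ^ (b - 1) * (1 - x) ^ (b - 1) =
      Real.Gamma b * Real.Gamma b / Real.Gamma (b + b) := by
  have := ProbabilityTheory.beta_eq_betaIntegralReal b b hb hb
  rw [ProbabilityTheory.beta] at this
  rw [this, Complex.betaIntegral, intervalIntegral.integral_of_le (by norm_num),
      ← integral_Ioc_eq_integral_Ioo, ← RCLike.re_to_complex, ← integral_re]
  · refine setIntegral_congr_fun measurableSet_Ioc fun x ⟨hx1, hx₂⟩ ↦ ?_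
    norm_cast
    rw [← Complex.ofReal_cpow, ← Complex.ofReal_cpow, RCLike.re_to_complex,
        Complex.re_mul_ofReal, Complex.ofReal_re]
    all_goals linarith
  convert! Complex.betaIntegral_convergent (u := b) (v := b) (by simpa) (by simpa)
  rw [intervalIntegrable_iff_integrableOn_Ioc_of_le (by simp), IntegrableOn]

lemma aux_sig (x : ℝ) :
    Real.sigmoid (2 * x) * (1 - Real.sigmoid (2 * x)) = (4 * Real.cosh x ^ 2)⁻¹ := by
  rw [← Real.sigmoid_neg, Real.sigmoid_def, Real.sigmoid_def, ← mul_inv, Real.cosh_eq, neg_neg]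
  congr 1
  have h1 : Real.exp (2 * x) = Real.exp x ^ 2 := by rw [← Real.exp_nat_mul]; norm_num
  have h2 : Real.exp (-(2 * x)) = Real.exp (-x) ^ 2 := by
    rw [← Real.exp_nat_mul]; congr 1; push_cast; ring
  have h3 : Real.exp x * Real.exp (-x) = 1 := by rw [← Real.exp_add]; simp
  rw [h1, h2]
  linear_combination (Real.exp x * Real.exp (-x) - 1) * h3

lemma aux_J (b : ℝ) (hb : 0 < b) :
    ∫ x : ℝ, Real.cosh x ^ (-(2 * b)) =
      Real.sqrt Real.pi * Real.Gamma b / Real.Gamma (b + 1 / 2) := by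
  have h1 := aux_beta b hb
  rw [← Real.range_sigmoid, ← Set.image_univ,
    integral_image_eq_integral_abs_deriv_smul MeasurableSet.univ
      (fun x _ => (Real.hasDerivAt_sigmoid x).hasDerivWithinAt)
      Real.sigmoid_injective.injOn] at h1
  have h2 := Measure.integral_comp_mul_left (fun x : ℝ => |Real.sigmoid x * (1 - Real.sigmoid x)| •
    (Real.sigmoid x ^ (b - 1) * (1 - Real.sigmoid x) ^ (b - 1))) 2
  rw [setIntegral_univ] at h1
  rw [h1] at h2
  have h3 : ∀ x : ℝ, |Real.sigmoid (2 * x) * (1 - Real.sigmoid (2 * x))| •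
    (Real.sigmoid (2 * x) ^ (b - 1) * (1 - Real.sigmoid (2 * x)) ^ (b - 1)) =
      (2:ℝ) ^ (-(2 * b)) * Real.cosh x ^ (-(2 * b)) := by
    intro x
    have hs := Real.sigmoid_pos (2 * x)
    have hs' : 0 < 1 - Real.sigmoid (2 * x) := sub_pos.2 (Real.sigmoid_lt_one _)
    have hc := Real.cosh_pos x
    rw [← Real.mul_rpow hs.le hs'.le, abs_of_pos (mul_pos hs hs'), smul_eq_mul,
      ← Real.rpow_one_add' (mul_pos hs hs').le (by linarith), aux_sig,
      ← Real.mul_rpow (by norm_num) hc.le, Real.inv_rpow (by positivity),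
      ← Real.rpow_neg (by positivity)]
    have : 4 * Real.cosh x ^ 2 = (2 * Real.cosh x) ^ (2:ℝ) := by
      rw [Real.rpow_two]; ring
    rw [this, ← Real.rpow_mul (by positivity)]
    congr 1; ring
  simp_rw [h3] at h2
  rw [integral_const_mul] at h2
  have h4 := Real.Gamma_mul_Gamma_add_half b
  rw [← two_mul] at h2
  have g1 := (Real.Gamma_pos_of_pos hb).ne'
  have g2 := (Real.Gamma_pos_of_pos (show 0 < b + 1/2 by linarith)).ne'
  have g3 := (Real.Gamma_pos_of_pos (show 0 < 2 * b by linarith)).ne'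
  have e : (2:ℝ) ^ (1 - 2 * b) = 2 * 2 ^ (-(2 * b)) := by
    rw [sub_eq_add_neg, Real.rpow_add (by norm_num), Real.rpow_one]
  rw [e] at h4
  have hk : (0:ℝ) < 2 ^ (-(2 * b)) := by positivity
  rw [eq_div_iff g2]
  apply mul_left_cancel₀ hk.ne'
  rw [← mul_assoc, h2, smul_eq_mul, abs_of_pos (by norm_num)]
  generalize Real.Gamma (b + 1 / 2) = G at *
  field_simp
  linear_combination h4

lemma aux_Jpos (b : ℝ) (hb : 0 < b) : 0 < ∫ x : ℝ, Real.cosh x ^ (-(2 * b)) := by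
  rw [aux_J b hb]
  have g1 := (Real.Gamma_pos_of_pos hb)
  have g2 := (Real.Gamma_pos_of_pos (show 0 < b + 1/2 by linarith))
  positivity

lemma aux_Jint (b : ℝ) (hb : 0 < b) : Integrable fun x : ℝ => Real.cosh x ^ (-(2 * b)) := by
  by_contra h
  exact (aux_Jpos b hb).ne' (integral_undef h)

lemma aux_Jrec (b : ℝ) (hb : 0 < b) : ∫ x : ℝ, Real.cosh x ^ (-(2 * (b + 1))) =
    2 * b / (2 * b + 1) * ∫ x : ℝ, Real.cosh x ^ (-(2 * b)) := by
  rw [aux_J b hb, aux_J _ (by linarith), Real.Gamma_add_one hb.ne',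
    show b + 1 + 1 / 2 = (b + 1 / 2) + 1 by ring, Real.Gamma_add_one (by positivity)]
  have g2 := (Real.Gamma_pos_of_pos (show 0 < b + 1/2 by linarith)).ne'
  field_simp

/-- For `p > 2`, `μ > 0` and `u = u_{μ,*}` as in the paper:
(i) `∫ |u'|² / ∫ u² = (p-2)μ/(p+2)`;
(ii) `∫ u^p / ∫ u² = 2pμ/(p+2)`;
(iii) `∫ u² / (∫ u^p)^{2/p} = κ_p μ^{-(p-2)/(2p)}` with the explicit constant `κ_p`. -/
theorem statement16 (p μ : ℝ) (hp : 2 < p) (hμ : 0 < μ)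
    (u : ℝ → ℝ)
    (hu : ∀ s, u s = (p * μ / 2) ^ (1 / (p - 2)) *
      Real.cosh ((p - 2) / 2 * Real.sqrt μ * s) ^ (-(2 / (p - 2))))
    (κ : ℝ)
    (hκ : κ = ((p + 2) / 4) ^ (2 / p) *
      (2 * Real.sqrt Real.pi / (p - 2) * Real.Gamma (2 / (p - 2)) /
        Real.Gamma (2 / (p - 2) + 1 / 2)) ^ ((p - 2) / p)) :
    (∫ s : ℝ, deriv u s ^ 2) / (∫ s : ℝ, u s ^ 2) = (p - 2) * μ / (p + 2) ∧
    (∫ s : ℝ, u s ^ p) / (∫ s : ℝ, u s ^ 2) = 2 * p * μ / (p + 2) ∧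
    (∫ s : ℝ, u s ^ 2) / (∫ s : ℝ, u s ^ p) ^ (2 / p) =
      κ * μ ^ (-((p - 2) / (2 * p))) := by
  have hp2 : 0 < p - 2 := by linarith
  have hsm : 0 < Real.sqrt μ := Real.sqrt_pos.2 hμ
  obtain ⟨q, hq⟩ : ∃ q, q = 2 / (p - 2) := ⟨_, rfl⟩
  obtain ⟨a, ha⟩ : ∃ a, a = (p - 2) / 2 * Real.sqrt μ := ⟨_, rfl⟩
  obtain ⟨A, hA⟩ : ∃ A, A = (p * μ / 2) ^ (1 / (p - 2)) := ⟨_, rfl⟩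
  rw [← hq, ← ha, ← hA] at hu
  rw [← hq] at hκ
  have hq0 : 0 < q := by rw [hq]; positivity
  have ha0 : 0 < a := by rw [ha]; positivity
  have hA0 : 0 < A := by rw [hA]; positivity
  have hpq : p * q = 2 * (q + 1) := by rw [hq]; field_simp; ring
  have hqa : q * a = Real.sqrt μ := by rw [hq, ha]; field_simp
  obtain ⟨J, hJ⟩ : ∃ J, J = ∫ x : ℝ, Real.cosh x ^ (-(2 * q)) := ⟨_, rfl⟩
  have hJ0 : 0 < J := hJ ▸ aux_Jpos q hq0
  have hJv := aux_J q hq0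
  have hJr := aux_Jrec q hq0
  rw [← hJ] at hJr hJv
  have hai : |a⁻¹| = a⁻¹ := abs_of_pos (by positivity)
  have hApow : A ^ p = (p * μ / 2) * A ^ 2 := by
    have : A ^ p = A ^ (p - 2) * A ^ (2:ℝ) := by rw [← Real.rpow_add hA0]; congr 1; ring
    rw [this, Real.rpow_two]
    congr 1
    rw [hA, ← Real.rpow_mul (by positivity), one_div_mul_cancel hp2.ne', Real.rpow_one]
  -- u ^ 2
  have I2 : ∫ s : ℝ, u s ^ 2 = A ^ 2 * (a⁻¹ * J) := by
    have : ∀ s, u s ^ 2 = A ^ 2 * (fun x : ℝ => Real.cosh x ^ (-(2 * q))) (a * s) := by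
      intro s
      have hc := Real.cosh_pos (a * s)
      simp only [hu, mul_pow]
      rw [← Real.rpow_natCast (Real.cosh (a * s) ^ (-q)), ← Real.rpow_mul hc.le]
      congr 2; push_cast; ring
    simp_rw [this]
    rw [integral_const_mul, Measure.integral_comp_mul_left
      (fun x : ℝ => Real.cosh x ^ (-(2 * q))), ← hJ, hai, smul_eq_mul]
  have Ip : ∫ s : ℝ, u s ^ p = A ^ p * (a⁻¹ * (2 * q / (2 * q + 1) * J)) := by
    have : ∀ s, u s ^ p = A ^ p * (fun x : ℝ => Real.cosh x ^ (-(2 * (q + 1)))) (a * s) := by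
      intro s
      have hc := Real.cosh_pos (a * s)
      simp only [hu]
      rw [Real.mul_rpow hA0.le (by positivity), ← Real.rpow_mul hc.le, ← hpq]
      congr 2; ring
    simp_rw [this]
    rw [integral_const_mul, Measure.integral_comp_mul_left
      (fun x : ℝ => Real.cosh x ^ (-(2 * (q + 1)))), hJr, hai, smul_eq_mul]
  have Id : ∫ s : ℝ, deriv u s ^ 2 = A ^ 2 * μ * (a⁻¹ * (J - 2 * q / (2 * q + 1) * J)) := by
    have : ∀ s, deriv u s ^ 2 = A ^ 2 * μ * (fun x : ℝ => Real.cosh x ^ (-(2 * q)) -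
        Real.cosh x ^ (-(2 * (q + 1)))) (a * s) := by
      intro s
      have hc := Real.cosh_pos (a * s)
      have hd : HasDerivAt u (A * ((Real.sinh (a * s) * a) * (-q) *
          Real.cosh (a * s) ^ (-q - 1))) s := by
        have h1 : HasDerivAt (fun s : ℝ => a * s) a s := by
          simpa using (hasDerivAt_id s).const_mul a
        have h2 := ((h1.cosh).rpow_const (p := -q) (Or.inl hc.ne')).const_mul A
        rw [show u = fun s => A * Real.cosh (a * s) ^ (-q) from funext hu]
        exact h2
      have hs := Real.cosh_sq (a * s)
      have e1 : Real.cosh (a * s) ^ (-(2 * q)) =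
          Real.cosh (a * s) ^ 2 * Real.cosh (a * s) ^ (-(2 * (q + 1))) := by
        rw [← Real.rpow_two, ← Real.rpow_add hc]; congr 1; ring
      have e2 : Real.cosh (a * s) ^ (-(2 * (q + 1))) = (Real.cosh (a * s) ^ (-q - 1)) ^ 2 := by
        rw [← Real.rpow_natCast (Real.cosh (a * s) ^ (-q - 1)), ← Real.rpow_mul hc.le]
        congr 1; push_cast; ring
      have hm : μ = (q * a) ^ 2 := by rw [hqa, Real.sq_sqrt hμ.le]
      rw [hd.deriv]
      simp only []
      rw [e1, e2, hm, hs]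
      ring
    simp_rw [this]
    rw [integral_const_mul, Measure.integral_comp_mul_left
      (fun x : ℝ => Real.cosh x ^ (-(2 * q)) - Real.cosh x ^ (-(2 * (q + 1)))), integral_sub (aux_Jint q hq0)
      (aux_Jint _ (by linarith)), hJr, ← hJ, hai, smul_eq_mul]
  have hX0 : 0 < A ^ 2 * (a⁻¹ * J) := by positivity
  have hr : 2 * q / (2 * q + 1) = 4 / (p + 2) := by
    have : p + 2 ≠ 0 := by linarith
    have : 2 * q + 1 ≠ 0 := by linarith
    rw [div_eq_div_iff ‹_› ‹_›]
    linear_combination 2 * hpq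
  have Ip' : ∫ s : ℝ, u s ^ p = 2 * p * μ / (p + 2) * (A ^ 2 * (a⁻¹ * J)) := by
    rw [Ip, hApow, hr]; field_simp; ring
  refine ⟨?_, ?_, ?_⟩
  · rw [Id, I2, hr]
    field_simp
    ring
  · rw [Ip', I2, mul_div_assoc, div_self hX0.ne', mul_one]
  · rw [Ip', I2]
    have hp0 : 0 < p := by linarith
    obtain ⟨X, hX⟩ : ∃ X, X = A ^ 2 * (a⁻¹ * J) := ⟨_, rfl⟩
    rw [← hX] at hX0 ⊢
    have hXv : X = (p * μ / 2) ^ (2 / (p - 2)) * ((2 * J / (p - 2)) * μ ^ (-(1/2) : ℝ)) := by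
      rw [hX, hA, ha, ← Real.rpow_natCast, ← Real.rpow_mul (by positivity),
        Real.rpow_neg hμ.le, ← Real.sqrt_eq_rpow]
      congr 1
      · congr 1; push_cast; ring
      · field_simp
    have hXp : X ^ ((p - 2) / p) = (p * μ / 2) ^ (2 / p) *
        ((2 * J / (p - 2)) ^ ((p - 2) / p) * μ ^ (-((p - 2) / (2 * p)))) := by
      rw [hXv, Real.mul_rpow (by positivity) (by positivity),
        Real.mul_rpow (by positivity) (by positivity), ← Real.rpow_mul (by positivity),
        ← Real.rpow_mul hμ.le]
      congr 2
      · field_simp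
      · congr 1; field_simp
    have hk : κ = ((p + 2) / 4) ^ (2 / p) * (2 * J / (p - 2)) ^ ((p - 2) / p) := by
      rw [hκ, hJv]; congr 2; ring
    have hXX : X = X ^ ((p - 2) / p) * X ^ (2 / p) := by
      rw [← Real.rpow_add hX0, ← add_div, sub_add_cancel, div_self hp0.ne', Real.rpow_one]
    have hc : (p * μ / 2) ^ (2 / p) = ((p + 2) / 4) ^ (2 / p) * (2 * p * μ / (p + 2)) ^ (2 / p) := by
      rw [← Real.mul_rpow (by positivity) (by positivity)]
      congr 1; field_simp; ring
    rw [Real.mul_rpow (by positivity) hX0.le, div_eq_iff (by positivity)]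
    calc X = X ^ ((p - 2) / p) * X ^ (2 / p) := hXX
      _ = _ := by rw [hXp, hc, hk]; ring
end

section
/- Let d ≥ 3 be an integer. Define b_FS(p,d) = 4(d-1)² p³ (p-1)² (2p(5p-6) - d(p² - 16p + 12)) / ( (d+2)(p+2)²(p-2)(3p-2)²(5p-6) ), y(p,d) = 16 p (p-1)(3p-4) / ( (3p-2)(5p-6)(7p-10) σ(p,d) ), and L_approx(p,d) = 4(d-1)² ( (p-1)p³/(p+2)² ) ( (p-2)p/((3p-2)²(5p-6)) + 2((d-1)/(d+2)) ((p-1)/(p-2)²) y(p,d) ), where σ(p,d) = (1/2)√(1 + 4 U₀(p)) - 1/2 - U₀(p) + (2/(p-2)²)(2 + d(p²-4)/(d-1)) and U₀(p) = 2p(p-1)/(p-2)². Then there exists p̄ ∈ (2, 2d/(d-2)) such that for every p ∈ (2, p̄), 2 b_FS(p,d) - L_approx(p,d) > 0. -/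
/-- For every integer `d ≥ 3`, with the explicit quantities
`U₀(p) = 2p(p-1)/(p-2)²`,
`σ(p,d) = (1/2)√(1+4U₀(p)) - 1/2 - U₀(p) + (2/(p-2)²)(2 + d(p²-4)/(d-1))`,
`b_FS(p,d)`, `y(p,d)` and `L_approx(p,d)` as in the paper, there exists
`p̄ ∈ (2, 2d/(d-2))` such that `2 b_FS(p,d) - L_approx(p,d) > 0` for all `p ∈ (2, p̄)`. -/
theorem statement19 (d : ℕ) (hd : 3 ≤ d)
    (U₀ σ bFS y Lapprox : ℝ → ℝ)
    (hU₀ : ∀ p, U₀ p = 2 * p * (p - 1) / (p - 2) ^ 2)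
    (hσ : ∀ p, σ p = 1 / 2 * Real.sqrt (1 + 4 * U₀ p) - 1 / 2 - U₀ p +
      2 / (p - 2) ^ 2 * (2 + (d : ℝ) * (p ^ 2 - 4) / ((d : ℝ) - 1)))
    (hbFS : ∀ p, bFS p = 4 * ((d : ℝ) - 1) ^ 2 * p ^ 3 * (p - 1) ^ 2 *
      (2 * p * (5 * p - 6) - (d : ℝ) * (p ^ 2 - 16 * p + 12)) /
      (((d : ℝ) + 2) * (p + 2) ^ 2 * (p - 2) * (3 * p - 2) ^ 2 * (5 * p - 6)))
    (hy : ∀ p, y p = 16 * p * (p - 1) * (3 * p - 4) /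
      ((3 * p - 2) * (5 * p - 6) * (7 * p - 10) * σ p))
    (hL : ∀ p, Lapprox p = 4 * ((d : ℝ) - 1) ^ 2 * ((p - 1) * p ^ 3 / (p + 2) ^ 2) *
      ((p - 2) * p / ((3 * p - 2) ^ 2 * (5 * p - 6)) +
        2 * (((d : ℝ) - 1) / ((d : ℝ) + 2)) * ((p - 1) / (p - 2) ^ 2) * y p)) :
    ∃ pbar : ℝ, pbar ∈ Set.Ioo (2 : ℝ) (2 * (d : ℝ) / ((d : ℝ) - 2)) ∧
      ∀ p ∈ Set.Ioo (2 : ℝ) pbar, 0 < 2 * bFS p - Lapprox p := by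
  have hd3 : (3:ℝ) ≤ (d:ℝ) := by exact_mod_cast hd
  generalize (d:ℝ) = D at *
  have hD1 : 0 < D - 1 := by linarith
  have hD2 : 0 < D - 2 := by linarith
  have hDp : 0 < D + 1 := by linarith
  have hDq : 0 < D + 2 := by linarith
  set G : ℝ → ℝ := fun p => 2 * (p - 1) * (2 * p * (5 * p - 6) - D * (p ^ 2 - 16 * p + 12))
    - (D + 2) * (p - 2) ^ 2 * p
    - 32 * p * (p - 1) ^ 2 * (3 * p - 4) * (D - 1) ^ 2 * (3 * p - 2) /
      ((7 * p - 10) * (p + 2) * (D + 1)) with hG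
  have hG2 : 0 < G 2 := by
    have : G 2 = 128 * D / (D + 1) := by
      simp only [hG]
      field_simp
      ring
    rw [this]
    have : 0 < D := by linarith
    positivity
  have hGc : ContinuousAt G 2 := by
    have : (7 * (2:ℝ) - 10) * (2 + 2) * (D + 1) ≠ 0 := by
      have : (7 * (2:ℝ) - 10) * (2 + 2) * (D + 1) = 16 * (D + 1) := by ring
      rw [this]; positivity
    simp only [hG]
    refine ContinuousAt.sub (by fun_prop) (ContinuousAt.div (by fun_prop) (by fun_prop) this)
  have hev := hGc.eventually (lt_mem_nhds hG2)
  obtain ⟨δ, hδ, hball⟩ := Metric.eventually_nhds_iff.1 hev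
  have hlt : 2 < 2 * D / (D - 2) := by
    rw [lt_div_iff₀ hD2]; linarith
  obtain ⟨b, hb1, hb2⟩ := exists_between (lt_min hlt (show (2:ℝ) < 2 + δ by linarith))
  refine ⟨b, ⟨hb1, lt_of_lt_of_le hb2 (min_le_left _ _)⟩, ?_⟩
  rintro p ⟨hp, hpb⟩
  have hGp : 0 < G p := by
    apply hball
    have := lt_of_lt_of_le hb2 (min_le_right _ _)
    rw [Real.dist_eq, abs_of_pos (by linarith)]
    linarith
  have h1 : 0 < p - 2 := by linarith
  have h2 : 0 < p - 1 := by linarith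
  have h3 : 0 < 3 * p - 2 := by linarith
  have h4 : 0 < 5 * p - 6 := by linarith
  have h5 : 0 < 7 * p - 10 := by linarith
  have h6 : 0 < p + 2 := by linarith
  have h7 : 0 < 3 * p - 2 := by linarith
  have h8 : 0 < p := by linarith
  have hs : Real.sqrt (1 + 4 * U₀ p) = (3 * p - 2) / (p - 2) := by
    rw [hU₀, ← Real.sqrt_sq (div_pos h7 h1).le]
    congr 1
    field_simp
    ring
  have hσp : σ p = (p + 2) * (D + 1) / ((D - 1) * (p - 2)) := by
    rw [hσ, hs, hU₀]
    field_simp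
    ring
  have hyp : y p = 16 * p * (p - 1) * (3 * p - 4) * (D - 1) * (p - 2) /
      ((3 * p - 2) * (5 * p - 6) * (7 * p - 10) * ((p + 2) * (D + 1))) := by
    rw [hy, hσp]
    field_simp
  have key : 2 * bFS p - Lapprox p = 4 * (D - 1) ^ 2 * p ^ 3 * (p - 1) /
      ((p + 2) ^ 2 * (5 * p - 6) * (3 * p - 2) ^ 2 * (D + 2) * (p - 2)) * G p := by
    rw [hbFS, hL, hyp]
    simp only [hG]
    field_simp
    ring
  rw [key]
  positivity
end
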